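/- Let B be a unital C*-subalgebra of B(H), let x ∈ H, and let ρ be a positive linear functional on B such that ρ(B) ≤ ⟨x, B x⟩ for every positive element B ∈ B (i.e., ρ ≤ ω_x|_B). Then there exists a positive operator T in the commutant B' with ‖T‖ ≤ 1 such that ρ(A) = ⟨x, T A x⟩ = ⟨T^{1/2} x, A (T^{1/2} x)⟩ for all A ∈ B. -/

import Mathlib

open scoped InnerProductSpace ComplexOrder

/-!
The form `(a, b) ↦ ρ(a⋆ b)` is positive semidefinite, hence is the inner product pulled back along
a linear map `g` into a Hilbert space. Domination by `ω_x` says `‖g a‖ ≤ ‖a x‖`, so `a x ↦ g a`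
extends to a contraction `S` on `H` vanishing on the orthogonal complement of the cyclic subspace of
`x`, and `T = S⋆ S` satisfies `⟨a x, T b x⟩ = ρ(a⋆ b)`. On the cyclic subspace, `T` lies in the
commutant because `ρ(a⋆ (b c)) = ρ((b⋆ a)⋆ c)`; on its complement, because that complement is
invariant and `T` is zero there.
-/

section SesquilinearForm

theorem isPosSemidef_of_isNonneg {E : Type*} [AddCommGroup E] [Module ℂ E]
    {f : E →ₗ⋆[ℂ] E →ₗ[ℂ] ℂ} (hf : f.IsNonneg) : f.IsPosSemidef where
  eq a b := by
    have self_real (c : E) : (f c c).im = 0 := (Complex.nonneg_iff.mp (hf.nonneg c)).2.symm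
    have im_eq : (f a b).im + (f b a).im = 0 := by simpa [self_real] using self_real (a + b)
    have re_eq : (f a b).re + -(f b a).re = 0 := by
      simpa [self_real] using self_real (a + Complex.I • b)
    apply Complex.ext <;> simp only [Complex.conj_re, Complex.conj_im] <;> linarith
  nonneg := hf.nonneg

variable {𝕜 : Type*} [RCLike 𝕜]

theorem exists_inner_eq_of_isPosSemidef.{u} {E : Type u} [AddCommGroup E] [Module 𝕜 E]
    {f : E →ₗ⋆[𝕜] E →ₗ[𝕜] 𝕜} (hf : f.IsPosSemidef) :
    ∃ (G : Type u) (_ : NormedAddCommGroup G) (_ : InnerProductSpace 𝕜 G) (_ : CompleteSpace G)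
      (g : E →ₗ[𝕜] G), ∀ a b, ⟪g a, g b⟫_𝕜 = f a b := by
  let core : PreInnerProductSpace.Core 𝕜 E :=
    { inner := fun a b => f a b
      conj_inner_symm := fun a b => hf.isSymm.eq b a
      re_inner_nonneg := fun a => (RCLike.nonneg_iff.mp (hf.nonneg a)).1
      add_left := fun a b c => f.map_add₂ a b c
      smul_left := fun a b r => f.map_smulₛₗ₂ r a b }
  let : SeminormedAddCommGroup E := InnerProductSpace.Core.toSeminormedAddCommGroup (c := core)
  let : InnerProductSpace 𝕜 E := InnerProductSpace.ofCore core
  exact ⟨UniformSpace.Completion E, inferInstance, inferInstance, inferInstance,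
    (UniformSpace.Completion.toComplL (𝕜 := 𝕜) (E := E)).toLinearMap,
    fun a b => UniformSpace.Completion.inner_coe a b⟩

end SesquilinearForm

section Hilbert

variable {𝕜 H : Type*} [RCLike 𝕜] [NormedAddCommGroup H] [InnerProductSpace 𝕜 H] [CompleteSpace H]

theorem exists_extension_vanishing_on_orthogonal {E G : Type*} [AddCommGroup E] [Module 𝕜 E]
    [NormedAddCommGroup G] [NormedSpace 𝕜 G] [CompleteSpace G] {e : E →ₗ[𝕜] H} {g : E →ₗ[𝕜] G}
    {C : ℝ} (hC : 0 ≤ C) (hg : ∀ a, ‖g a‖ ≤ C * ‖e a‖) :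
    ∃ S : H →L[𝕜] G, ‖S‖ ≤ C ∧ (∀ a, S (e a) = g a) ∧ ∀ y ∈ e.rangeᗮ, S y = 0 := by
  let K : Submodule 𝕜 H := e.range.topologicalClosure
  have : CompleteSpace K := e.range.isClosed_topologicalClosure.completeSpace_coe
  let eK : E →ₗ[𝕜] K :=
    e.codRestrict K fun a => e.range.le_topologicalClosure (e.mem_range_self a)
  have dense_eK : DenseRange eK := by
    rw [DenseRange, Subtype.dense_iff, ← Set.range_comp]
    exact fun y hy => hy
  let P : H →L[𝕜] K := K.orthogonalProjectionOnto
  refine ⟨g.extendOfNorm eK ∘L P, ?_, fun a => ?_, fun y hy => ?_⟩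
  · calc ‖g.extendOfNorm eK ∘L P‖ ≤ ‖g.extendOfNorm eK‖ * ‖P‖ :=
          ContinuousLinearMap.opNorm_comp_le _ _
      _ ≤ C * 1 := mul_le_mul (LinearMap.opNorm_extendOfNorm_le dense_eK hC hg)
          K.orthogonalProjectionOnto_norm_le (norm_nonneg _) hC
      _ = C := mul_one C
  · have hP : P (e a) = eK a := K.orthogonalProjectionOnto_mem_subspace_eq_self (eK a)
    rw [ContinuousLinearMap.comp_apply, hP, LinearMap.extendOfNorm_eq dense_eK ⟨C, hg⟩]
  · have hP : P y = 0 := by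
      rwa [Submodule.orthogonalProjectionOnto_eq_zero_iff, Submodule.orthogonal_closure]
    rw [ContinuousLinearMap.comp_apply, hP, map_zero]

theorem exists_isPositive_inner_eq {E : Type*} [AddCommGroup E] [Module 𝕜 E] {e : E →ₗ[𝕜] H}
    {f : E →ₗ⋆[𝕜] E →ₗ[𝕜] 𝕜} (hf : f.IsPosSemidef) {C : ℝ} (hC : 0 ≤ C)
    (hfe : ∀ a, RCLike.re (f a a) ≤ C * ‖e a‖ ^ 2) :
    ∃ T : H →L[𝕜] H, T.IsPositive ∧ ‖T‖ ≤ C ∧ (∀ a b, ⟪e a, T (e b)⟫_𝕜 = f a b) ∧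
      ∀ y ∈ e.rangeᗮ, T y = 0 := by
  obtain ⟨G, _, _, _, g, inner_g⟩ := exists_inner_eq_of_isPosSemidef hf
  have norm_g_le (a : E) : ‖g a‖ ≤ √C * ‖e a‖ := by
    refine le_of_sq_le_sq ?_ (by positivity)
    calc ‖g a‖ ^ 2 = RCLike.re (f a a) := by rw [← inner_g, inner_self_eq_norm_sq]
      _ ≤ C * ‖e a‖ ^ 2 := hfe a
      _ = (√C * ‖e a‖) ^ 2 := by rw [mul_pow, Real.sq_sqrt hC]
  obtain ⟨S, norm_S, S_e, S_orthogonal⟩ :=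
    exists_extension_vanishing_on_orthogonal (Real.sqrt_nonneg C) norm_g_le
  refine ⟨S.adjoint ∘L S, ContinuousLinearMap.isPositive_adjoint_comp_self S, ?_, fun a b => ?_,
    fun y hy => ?_⟩
  · calc ‖S.adjoint ∘L S‖ = ‖S‖ * ‖S‖ := S.norm_adjoint_comp_self
      _ ≤ √C * √C := by gcongr
      _ = C := Real.mul_self_sqrt hC
  · rw [ContinuousLinearMap.comp_apply, ContinuousLinearMap.adjoint_inner_right, S_e, S_e, inner_g]
  · rw [ContinuousLinearMap.comp_apply, S_orthogonal y hy, map_zero]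

theorem ext_of_eqOn_of_eqOn_orthogonal {F : Type*} [NormedAddCommGroup F] [NormedSpace 𝕜 F]
    {M : Submodule 𝕜 H} {U V : H →L[𝕜] F} (hM : Set.EqOn U V M) (hMperp : Set.EqOn U V Mᗮ) :
    U = V := by
  have : CompleteSpace M.topologicalClosure :=
    M.isClosed_topologicalClosure.completeSpace_coe
  have eqOn_closure : Set.EqOn U V M.topologicalClosure := hM.closure U.continuous V.continuous
  ext y
  obtain ⟨u, hu, v, hv, rfl⟩ := M.topologicalClosure.exists_add_mem_mem_orthogonal y
  rw [Submodule.orthogonal_closure] at hv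
  rw [map_add, map_add, eqOn_closure hu, hMperp hv]

theorem ext_inner_of_eqOn_orthogonal {M : Submodule 𝕜 H} {U V : H →L[𝕜] H}
    (hM : ∀ y ∈ M, ∀ z ∈ M, ⟪y, U z⟫_𝕜 = ⟪y, V z⟫_𝕜) (hMperp : Set.EqOn U V Mᗮ)
    (hMperp_adjoint : Set.EqOn U.adjoint V.adjoint Mᗮ) : U = V := by
  refine ext_of_eqOn_of_eqOn_orthogonal (fun z hz => sub_eq_zero.mp ?_) hMperp
  have sub_mem : U z - V z ∈ Mᗮ := fun y hy => by
    rw [inner_sub_right, hM y hy z hz, sub_self]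
  rw [← inner_self_eq_zero (𝕜 := 𝕜), inner_sub_right, ← ContinuousLinearMap.adjoint_inner_left,
    ← ContinuousLinearMap.adjoint_inner_left, hMperp_adjoint sub_mem, sub_self]

theorem commute_of_inner_eq_on_reducing_submodule {M : Submodule 𝕜 H} {T R : H →L[𝕜] H}
    (hT : IsSelfAdjoint T) (hTM : ∀ y ∈ Mᗮ, T y = 0)
    (hR : M ∈ Module.End.invtSubmodule R.toLinearMap)
    (hR_adjoint : M ∈ Module.End.invtSubmodule R.adjoint.toLinearMap)
    (hTR : ∀ y ∈ M, ∀ z ∈ M, ⟪y, T (R z)⟫_𝕜 = ⟪R.adjoint y, T z⟫_𝕜) : Commute T R := by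
  have R_mem : ∀ y ∈ Mᗮ, R y ∈ Mᗮ :=
    ContinuousLinearMap.orthogonal_mem_invtSubmodule hR_adjoint
  have R_adjoint_mem : ∀ y ∈ Mᗮ, R.adjoint y ∈ Mᗮ :=
    ContinuousLinearMap.orthogonal_mem_invtSubmodule (by rwa [ContinuousLinearMap.adjoint_adjoint])
  refine ext_inner_of_eqOn_orthogonal (M := M) (fun y hy z hz => ?_) (fun y hy => ?_)
    (fun y hy => ?_)
  · rw [mul_apply_eq_comp, mul_apply_eq_comp, hTR y hy z hz,
      ContinuousLinearMap.adjoint_inner_left]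
  · rw [mul_apply_eq_comp, mul_apply_eq_comp, hTM y hy,
      hTM _ (R_mem y hy), map_zero]
  · rw [← ContinuousLinearMap.star_eq_adjoint, ← ContinuousLinearMap.star_eq_adjoint, star_mul,
      star_mul, hT.star_eq, ContinuousLinearMap.star_eq_adjoint, mul_apply_eq_comp,
      mul_apply_eq_comp, hTM y hy, hTM _ (R_adjoint_mem y hy), map_zero]

end Hilbert

theorem inner_sqrt_eq_of_commute {H : Type*} [NormedAddCommGroup H] [InnerProductSpace ℂ H]
    [CompleteSpace H] {T R : H →L[ℂ] H} (hT : 0 ≤ T) (hTR : Commute T R) (x y : H) :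
    ⟪CFC.sqrt T x, R (CFC.sqrt T y)⟫_ℂ = ⟪x, (T * R) y⟫_ℂ := by
  have sqrt_comm : Commute (CFC.sqrt T) R := hTR.cfcₙ_nnreal _
  have sqrt_symm : (CFC.sqrt T).IsSymmetric := (CFC.sqrt_nonneg T).isSelfAdjoint.isSymmetric
  calc ⟪CFC.sqrt T x, R (CFC.sqrt T y)⟫_ℂ = ⟪x, (CFC.sqrt T * (R * CFC.sqrt T)) y⟫_ℂ :=
        sqrt_symm x _
    _ = ⟪x, (T * R) y⟫_ℂ := by
        rw [← sqrt_comm.eq, ← mul_assoc, CFC.sqrt_mul_sqrt_self T hT]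

section GNSForm

variable {R A : Type*} [CommSemiring R] [StarRing R] [Semiring A] [StarRing A] [Algebra R A]
  [StarModule R A]

/-- The sesquilinear form `(a, b) ↦ ρ (a⋆ b)` of the GNS construction, for a linear functional `ρ`
on a star algebra; as for inner products, it is conjugate-linear in the first variable. -/
def gnsForm (ρ : A →ₗ[R] R) : A →ₗ⋆[R] A →ₗ[R] R :=
  LinearMap.mk₂'ₛₗ (starRingEnd R) (RingHom.id R) (fun a b => ρ (star a * b))
    (fun a b c => by rw [star_add, add_mul, map_add])
    (fun r a b => by rw [star_smul, smul_mul_assoc, map_smul, starRingEnd_apply])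
    (fun a b c => by rw [mul_add, map_add])
    (fun r a b => by rw [mul_smul_comm, map_smul, RingHom.id_apply])

theorem gnsForm_apply (ρ : A →ₗ[R] R) (a b : A) : gnsForm ρ a b = ρ (star a * b) :=
  rfl

end GNSForm

theorem isPosSemidef_gnsForm {A : Type*} [Ring A] [StarRing A] [Algebra ℂ A] [StarModule ℂ A]
    {ρ : A →ₗ[ℂ] ℂ} (hρ : ∀ a, 0 ≤ ρ (star a * a)) : (gnsForm ρ).IsPosSemidef :=
  isPosSemidef_of_isNonneg ⟨hρ⟩

section Representation

variable {A H : Type*} [Ring A] [StarRing A] [Algebra ℂ A] [NormedAddCommGroup H]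
  [InnerProductSpace ℂ H] [CompleteSpace H]

/-- The orbit map `a ↦ π(a) x` of a vector `x` under a star representation `π`; its range is the
cyclic subspace generated by `x`. -/
noncomputable def orbitMap (π : A →⋆ₐ[ℂ] (H →L[ℂ] H)) (x : H) : A →ₗ[ℂ] H :=
  (ContinuousLinearMap.apply ℂ H x).toLinearMap ∘ₗ π.toLinearMap

theorem map_orbitMap (π : A →⋆ₐ[ℂ] (H →L[ℂ] H)) (x : H) (a b : A) :
    π a (orbitMap π x b) = orbitMap π x (a * b) :=
  congrArg (· x) (map_mul π a b).symm

theorem orbitMap_one (π : A →⋆ₐ[ℂ] (H →L[ℂ] H)) (x : H) : orbitMap π x 1 = x :=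
  congrArg (· x) (map_one π)

theorem range_orbitMap_mem_invtSubmodule (π : A →⋆ₐ[ℂ] (H →L[ℂ] H)) (x : H) (a : A) :
    (orbitMap π x).range ∈ Module.End.invtSubmodule (π a).toLinearMap := by
  rintro _ ⟨b, rfl⟩
  exact ⟨a * b, (map_orbitMap π x a b).symm⟩

theorem adjoint_starAlgHom_apply (π : A →⋆ₐ[ℂ] (H →L[ℂ] H)) (a : A) :
    (π a).adjoint = π (star a) :=
  (map_star π a).symm

theorem inner_map_star_mul_self (π : A →⋆ₐ[ℂ] (H →L[ℂ] H)) (x : H) (a : A) :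
    ⟪x, π (star a * a) x⟫_ℂ = ((‖orbitMap π x a‖ ^ 2 : ℝ) : ℂ) := by
  rw [map_mul, mul_apply_eq_comp, ← adjoint_starAlgHom_apply,
    ContinuousLinearMap.adjoint_inner_right, inner_self_eq_norm_sq_to_K]
  norm_cast

theorem exists_commutant_inner_orbitMap_eq [StarModule ℂ A] (π : A →⋆ₐ[ℂ] (H →L[ℂ] H)) (x : H)
    (ρ : A →ₗ[ℂ] ℂ) (hρpos : ∀ a, 0 ≤ ρ (star a * a))
    (hρdom : ∀ a, ρ (star a * a) ≤ ⟪x, π (star a * a) x⟫_ℂ) :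
    ∃ T : H →L[ℂ] H, 0 ≤ T ∧ ‖T‖ ≤ 1 ∧ (∀ a, Commute T (π a)) ∧
      ∀ a b, ⟪orbitMap π x a, T (orbitMap π x b)⟫_ℂ = ρ (star a * b) := by
  have gnsForm_le (a : A) : (gnsForm ρ a a).re ≤ 1 * ‖orbitMap π x a‖ ^ 2 := by
    rw [one_mul, gnsForm_apply, ← Complex.ofReal_re (_ ^ 2), ← inner_map_star_mul_self]
    exact (Complex.le_def.mp (hρdom a)).1
  obtain ⟨T, T_pos, norm_T, inner_T, T_orthogonal⟩ :=
    exists_isPositive_inner_eq (isPosSemidef_gnsForm hρpos) zero_le_one gnsForm_le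
  refine ⟨T, T.nonneg_iff_isPositive.mpr T_pos, norm_T, fun a => ?_, inner_T⟩
  refine commute_of_inner_eq_on_reducing_submodule T_pos.isSelfAdjoint T_orthogonal
    (range_orbitMap_mem_invtSubmodule π x a) ?_ ?_
  · rw [adjoint_starAlgHom_apply]
    exact range_orbitMap_mem_invtSubmodule π x (star a)
  · rintro _ ⟨b, rfl⟩ _ ⟨c, rfl⟩
    calc ⟪orbitMap π x b, T (π a (orbitMap π x c))⟫_ℂ = ρ (star b * (a * c)) := by
          rw [map_orbitMap]; exact inner_T b (a * c)
      _ = ρ (star (star a * b) * c) := by rw [star_mul, star_star, mul_assoc]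
      _ = ⟪(π a).adjoint (orbitMap π x b), T (orbitMap π x c)⟫_ℂ := by
          rw [adjoint_starAlgHom_apply, map_orbitMap]; exact (inner_T (star a * b) c).symm

theorem positive_functional_dominated_by_vector_state_general [StarModule ℂ A]
    (π : A →⋆ₐ[ℂ] (H →L[ℂ] H)) (x : H) (ρ : A →ₗ[ℂ] ℂ)
    (hρpos : ∀ a, 0 ≤ ρ (star a * a))
    (hρdom : ∀ a, ρ (star a * a) ≤ ⟪x, π (star a * a) x⟫_ℂ) :
    ∃ T : H →L[ℂ] H, T ∈ Set.centralizer (Set.range π) ∧ 0 ≤ T ∧ ‖T‖ ≤ 1 ∧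
      ∀ a, ρ a = ⟪x, (T * π a) x⟫_ℂ ∧
        ρ a = ⟪CFC.sqrt T x, π a (CFC.sqrt T x)⟫_ℂ := by
  obtain ⟨T, T_nonneg, norm_T, T_comm, inner_T⟩ :=
    exists_commutant_inner_orbitMap_eq π x ρ hρpos hρdom
  have ρ_eq (a : A) : ρ a = ⟪x, (T * π a) x⟫_ℂ :=
    calc ρ a = ρ (star 1 * a) := by rw [star_one, one_mul]
      _ = ⟪orbitMap π x 1, T (orbitMap π x a)⟫_ℂ := (inner_T 1 a).symm
      _ = ⟪x, (T * π a) x⟫_ℂ := by rw [orbitMap_one]; rfl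
  refine ⟨T, ?_, T_nonneg, norm_T, fun a => ⟨ρ_eq a, ?_⟩⟩
  · rintro _ ⟨a, rfl⟩
    exact (T_comm a).symm
  · rw [ρ_eq, inner_sqrt_eq_of_commute T_nonneg (T_comm a)]

end Representation

/-- **Lemma 1 (Kadison–Ringrose, Prop. 7.3.5).**
Let `B` be a unital C*-subalgebra of `B(H)`, let `x ∈ H`, and let `ρ` be a positive linear
functional on `B` with `ρ ≤ ω_x|_B`.  Then there is a positive operator `T` in the commutant
`B'` with `‖T‖ ≤ 1` such that `ρ(A) = ⟨x, T A x⟩ = ⟨T^{1/2} x, A (T^{1/2} x)⟩` for all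
`A ∈ B`.  (Here `T^{1/2}` is the positive square root of `T`, i.e. `CFC.sqrt T`.) -/
theorem positive_functional_dominated_by_vector_state
    {H : Type*} [NormedAddCommGroup H] [InnerProductSpace ℂ H] [CompleteSpace H]
    (B : StarSubalgebra ℂ (H →L[ℂ] H)) (hBclosed : IsClosed (B : Set (H →L[ℂ] H)))
    (x : H) (ρ : B →ₗ[ℂ] ℂ)
    (hρpos : ∀ b : B, 0 ≤ (b : H →L[ℂ] H) → 0 ≤ ρ b)
    (hρdom : ∀ b : B, 0 ≤ (b : H →L[ℂ] H) → ρ b ≤ ⟪x, (b : H →L[ℂ] H) x⟫_ℂ) :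
    ∃ T : H →L[ℂ] H, T ∈ Set.centralizer (B : Set (H →L[ℂ] H)) ∧ 0 ≤ T ∧ ‖T‖ ≤ 1 ∧
      ∀ b : B, ρ b = ⟪x, (T * (b : H →L[ℂ] H)) x⟫_ℂ ∧
        ρ b = ⟪CFC.sqrt T x, (b : H →L[ℂ] H) (CFC.sqrt T x)⟫_ℂ := by
  simpa using positive_functional_dominated_by_vector_state_general B.subtype x ρ
    (fun a => hρpos _ (star_mul_self_nonneg (a : H →L[ℂ] H)))
    (fun a => hρdom _ (star_mul_self_nonneg (a : H →L[ℂ] H)))
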